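/- The quasi-consecutive patterns 1̲3̲2̲4 and 1̲4̲2̲3 are des-Wilf-equivalent: for all n ≥ 1 and k ≥ 0, the number of permutations of length n avoiding 1̲3̲2̲4 with exactly k descents equals the number of permutations of length n avoiding 1̲4̲2̲3 with exactly k descents. -/

import Mathlib

open scoped Classical

/-- The number of descents of a permutation of `Fin n` (one-line notation `π 0, π 1, …`). -/
def des {n : ℕ} (π : Equiv.Perm (Fin n)) : ℕ :=
  (Finset.univ.filter fun i : Fin n =>
    ∃ h : (i : ℕ) + 1 < n, π ⟨(i : ℕ) + 1, h⟩ < π i).card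

/-- `π` avoids the quasi-consecutive pattern 1̲3̲2̲4: there are no (0-indexed) positions
`i` and `j` with `i + 3 ≤ j < n` such that π_i < π_{i+2} < π_{i+1} < π_j. -/
def AvoidsA {n : ℕ} (π : Equiv.Perm (Fin n)) : Prop :=
  ¬ ∃ (i j : ℕ) (hj : j < n) (hij : i + 3 ≤ j), π ⟨i, by omega⟩ < π ⟨i + 2, by omega⟩ ∧ π ⟨i + 2, by omega⟩ < π ⟨i + 1, by omega⟩ ∧ π ⟨i + 1, by omega⟩ < π ⟨j, hj⟩

/-- `π` avoids the quasi-consecutive pattern 1̲4̲2̲3: there are no (0-indexed) positions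
`i` and `j` with `i + 3 ≤ j < n` such that π_i < π_{i+2} < π_j < π_{i+1}. -/
def AvoidsB {n : ℕ} (π : Equiv.Perm (Fin n)) : Prop :=
  ¬ ∃ (i j : ℕ) (hj : j < n) (hij : i + 3 ≤ j), π ⟨i, by omega⟩ < π ⟨i + 2, by omega⟩ ∧ π ⟨i + 2, by omega⟩ < π ⟨j, hj⟩ ∧ π ⟨j, hj⟩ < π ⟨i + 1, by omega⟩

/-!
Build a permutation by prepending letters. Prepending `p` to `x y ⋯` creates an occurrence of
either pattern at the front only if `p < y < x`. In that case 1̲3̲2̲4 is still avoided exactly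
when `x` is the largest letter, since otherwise the largest letter comes later and completes the
pattern; and 1̲4̲2̲3 is still avoided exactly when `x = y + 1`, since otherwise a letter strictly
between `y` and `x` comes later. So for given `p` and `y` exactly one `x > y` is allowed in each
case, and exchanging the two values turns one rule into the other. The exchange keeps the descents
before and after `x`, and no occurrence starts at `x` because `x > y`. Doing this every time a
letter is prepended gives the bijection; it fixes the first letter, and also the second one when
the permutation starts with a descent, which makes the successive exchanges compatible.
-/

namespace QuasiConsecutive

open Equiv

variable {n : ℕ}

/-- Prepending the letter `p` to the one-line notation of `σ`: the letters of `σ` that are at least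
`p` are raised by one to make room for it. Every nonempty permutation arises in exactly one way. -/
def prepend : Fin (n + 1) × Perm (Fin n) ≃ Perm (Fin (n + 1)) where
  toFun q := (finSuccEquiv n).trans (q.2.optionCongr.trans (finSuccEquiv' q.1).symm)
  invFun π := (π 0, removeNone ((finSuccEquiv n).symm.trans (π.trans (finSuccEquiv' (π 0)))))
  left_inv := by
    rintro ⟨p, σ⟩
    ext <;> simp [Equiv.trans_assoc, ← Equiv.trans_assoc (finSuccEquiv n).symm]
  right_inv π := by
    ext
    simp [map_equiv_removeNone]

lemma prepend_apply_zero (p : Fin (n + 1)) (σ : Perm (Fin n)) : prepend (p, σ) 0 = p := by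
  simp [prepend]

lemma prepend_apply_succ (p : Fin (n + 1)) (σ : Perm (Fin n)) (i : Fin n) :
    prepend (p, σ) i.succ = p.succAbove (σ i) := by
  simp [prepend]

lemma prepend_zero_lt_succ_iff (p : Fin (n + 1)) (σ : Perm (Fin n)) (i : Fin n) :
    prepend (p, σ) 0 < prepend (p, σ) i.succ ↔ (p : ℕ) ≤ σ i := by
  rw [prepend_apply_zero, prepend_apply_succ, Fin.lt_succAbove_iff_le_castSucc, Fin.le_def,
    Fin.val_castSucc]

lemma prepend_succ_lt_zero_iff (p : Fin (n + 1)) (σ : Perm (Fin n)) (i : Fin n) :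
    prepend (p, σ) i.succ < prepend (p, σ) 0 ↔ (σ i : ℕ) < p := by
  rw [prepend_apply_zero, prepend_apply_succ, Fin.succAbove_lt_iff_castSucc_lt, Fin.lt_def,
    Fin.val_castSucc]

lemma prepend_succ_lt_succ_iff (p : Fin (n + 1)) (σ : Perm (Fin n)) (i j : Fin n) :
    prepend (p, σ) i.succ < prepend (p, σ) j.succ ↔ σ i < σ j := by
  rw [prepend_apply_succ, prepend_apply_succ, Fin.succAbove_lt_succAbove_iff]

lemma prepend_one_lt_zero_iff (p : Fin (n + 2)) (σ : Perm (Fin (n + 1))) :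
    prepend (p, σ) 1 < prepend (p, σ) 0 ↔ (σ 0 : ℕ) < p :=
  prepend_succ_lt_zero_iff p σ 0

lemma prepend_apply_one_of_lt {p : Fin (n + 2)} {σ : Perm (Fin (n + 1))} (h : (σ 0 : ℕ) < p) :
    prepend (p, σ) 1 = (σ 0).castSucc :=
  (prepend_apply_succ p σ 0).trans (Fin.succAbove_of_castSucc_lt _ _ h)

lemma des_prepend (p : Fin (n + 2)) (σ : Perm (Fin (n + 1))) :
    des (prepend (p, σ)) = des σ + if (σ 0 : ℕ) < p then 1 else 0 := by
  have head : (∃ h : ((0 : Fin (n + 2)) : ℕ) + 1 < n + 2,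
      prepend (p, σ) ⟨((0 : Fin (n + 2)) : ℕ) + 1, h⟩ < prepend (p, σ) 0) ↔ (σ 0 : ℕ) < p := by
    rw [← prepend_succ_lt_zero_iff]
    exact exists_prop_of_true (by simp)
  have tail (i : Fin (n + 1)) : (∃ h : (i.succ : ℕ) + 1 < n + 2,
      prepend (p, σ) ⟨(i.succ : ℕ) + 1, h⟩ < prepend (p, σ) i.succ) ↔
      ∃ h : (i : ℕ) + 1 < n + 1, σ ⟨(i : ℕ) + 1, h⟩ < σ i :=
    exists_prop_congr (fun h ↦ prepend_succ_lt_succ_iff p σ ⟨i + 1, Nat.succ_lt_succ_iff.1 h⟩ i)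
      Nat.succ_lt_succ_iff
  simp only [des, Finset.card_filter]
  rw [Fin.sum_univ_succ, add_comm]
  simp only [head, tail]

lemma exists_two_le_apply_eq (σ : Perm (Fin (n + 2))) {v : Fin (n + 2)} (h0 : σ 0 ≠ v)
    (h1 : σ 1 ≠ v) : ∃ (j : ℕ) (hj : j < n + 2), 2 ≤ j ∧ σ ⟨j, hj⟩ = v := by
  obtain ⟨j, rfl⟩ := σ.surjective v
  match j with
  | ⟨0, _⟩ => exact absurd rfl h0
  | ⟨1, _⟩ => exact absurd rfl h1
  | ⟨j + 2, hj⟩ => exact ⟨j + 2, hj, by omega, rfl⟩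

lemma exists_two_le_apply_zero_lt_iff (σ : Perm (Fin (n + 2))) (hd : σ 1 < σ 0) :
    (∃ (j : ℕ) (hj : j < n + 2), 2 ≤ j ∧ σ 0 < σ ⟨j, hj⟩) ↔ σ 0 ≠ Fin.last (n + 1) := by
  constructor
  · rintro ⟨j, hj, -, h⟩
    exact Fin.ne_last_of_lt h
  · intro h
    obtain ⟨j, hj, hj2, hlast⟩ :=
      exists_two_le_apply_eq σ h (hd.trans_le (Fin.le_last _)).ne
    exact ⟨j, hj, hj2, hlast ▸ Fin.lt_last_iff_ne_last.2 h⟩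

lemma exists_two_le_apply_between_iff (σ : Perm (Fin (n + 2))) (hd : σ 1 < σ 0) :
    (∃ (j : ℕ) (hj : j < n + 2), 2 ≤ j ∧ σ 1 < σ ⟨j, hj⟩ ∧ σ ⟨j, hj⟩ < σ 0) ↔
      ¬ σ 1 ⋖ σ 0 := by
  rw [not_covBy_iff hd]
  constructor
  · rintro ⟨j, hj, -, h⟩
    exact ⟨_, h⟩
  · rintro ⟨v, hv1, hv0⟩
    obtain ⟨j, hj, hj2, rfl⟩ := exists_two_le_apply_eq σ hv0.ne' hv1.ne
    exact ⟨j, hj, hj2, hv1, hv0⟩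

lemma exists_window_succ {P : ∀ i j, j < n + 1 → i + 3 ≤ j → Prop} :
    (∃ i j hj hij, P i j hj hij) ↔
      (∃ (i j : ℕ) (hj : j < n) (hij : i + 3 ≤ j),
        P (i + 1) (j + 1) (Nat.succ_lt_succ hj) (by omega)) ∨
      ∃ (j : ℕ) (hj : j < n) (hij : 2 ≤ j), P 0 (j + 1) (Nat.succ_lt_succ hj) (by omega) := by
  constructor
  · rintro ⟨_ | i, _ | j, hj, hij, h⟩
    · omega
    · exact .inr ⟨j, by omega, by omega, h⟩
    · omega
    · exact .inl ⟨i, j, by omega, by omega, h⟩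
  · rintro (⟨i, j, hj, hij, h⟩ | ⟨j, hj, hij, h⟩)
    · exact ⟨i + 1, j + 1, _, _, h⟩
    · exact ⟨0, j + 1, _, _, h⟩

lemma avoidsA_prepend (p : Fin (n + 3)) (σ : Perm (Fin (n + 2))) :
    AvoidsA (prepend (p, σ)) ↔
      AvoidsA σ ∧ (σ 1 < σ 0 → (p : ℕ) ≤ σ 1 → σ 0 = Fin.last (n + 1)) := by
  rw [AvoidsA, exists_window_succ, not_or]
  refine and_congr (not_congr ?_) ?_
  · exact exists₄_congr fun i j hj hij ↦
      and_congr (prepend_succ_lt_succ_iff p σ ⟨i, by omega⟩ ⟨i + 2, by omega⟩) <|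
      and_congr (prepend_succ_lt_succ_iff p σ ⟨i + 2, by omega⟩ ⟨i + 1, by omega⟩)
        (prepend_succ_lt_succ_iff p σ ⟨i + 1, by omega⟩ ⟨j, hj⟩)
  · refine (not_congr <| exists₃_congr fun j hj _ ↦ and_congr (prepend_zero_lt_succ_iff p σ 1) <|
      and_congr (prepend_succ_lt_succ_iff p σ 1 0)
        (prepend_succ_lt_succ_iff p σ 0 ⟨j, hj⟩)).trans ?_
    have later_letter := exists_two_le_apply_zero_lt_iff σ
    grind

lemma avoidsB_prepend (p : Fin (n + 3)) (σ : Perm (Fin (n + 2))) :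
    AvoidsB (prepend (p, σ)) ↔
      AvoidsB σ ∧ (σ 1 < σ 0 → (p : ℕ) ≤ σ 1 → σ 1 ⋖ σ 0) := by
  rw [AvoidsB, exists_window_succ, not_or]
  refine and_congr (not_congr ?_) ?_
  · exact exists₄_congr fun i j hj hij ↦
      and_congr (prepend_succ_lt_succ_iff p σ ⟨i, by omega⟩ ⟨i + 2, by omega⟩) <|
      and_congr (prepend_succ_lt_succ_iff p σ ⟨i + 2, by omega⟩ ⟨j, hj⟩)
        (prepend_succ_lt_succ_iff p σ ⟨j, hj⟩ ⟨i + 1, by omega⟩)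
  · refine (not_congr <| exists₃_congr fun j hj _ ↦ and_congr (prepend_zero_lt_succ_iff p σ 1) <|
      and_congr (prepend_succ_lt_succ_iff p σ 1 ⟨j, hj⟩)
        (prepend_succ_lt_succ_iff p σ ⟨j, hj⟩ 0)).trans ?_
    have later_letter := exists_two_le_apply_between_iff σ
    grind

lemma avoidsA_of_le_three (hn : n ≤ 3) (π : Perm (Fin n)) : AvoidsA π := by
  rintro ⟨i, j, hj, hij, -⟩
  omega

lemma avoidsB_of_le_three (hn : n ≤ 3) (π : Perm (Fin n)) : AvoidsB π := by
  rintro ⟨i, j, hj, hij, -⟩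
  omega

lemma avoidsB_prepend_of_lt {p : Fin (n + 2)} {σ : Perm (Fin (n + 1))} (h : (σ 0 : ℕ) < p) :
    AvoidsB (prepend (p, σ)) ↔ AvoidsB σ := by
  obtain _ | n := n
  · exact iff_of_true (avoidsB_of_le_three (by omega) _) (avoidsB_of_le_three (by omega) _)
  · rw [avoidsB_prepend, and_iff_left]
    intro hd hp
    exact absurd (hp.trans hd.le) h.not_ge

/-- For a window `p x y` with `p < y < x`, the exchange of the two values of the middle letter `x`
at which no occurrence starts there: `y + 1` for 1̲4̲2̲3 and the largest letter for 1̲3̲2̲4.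
Neither pattern can start with `p` above `y`, and then nothing is moved. Each letter is numbered
among itself and the letters to its right, so `p ≤ y` stands for `p` below `y`, and `y + 1` is
`y.succ`. -/
def letterSwap (p : ℕ) (y : Fin (n + 1)) : Perm (Fin (n + 2)) :=
  if p ≤ y then swap y.succ (Fin.last (n + 1)) else 1

lemma lt_letterSwap_iff (p : ℕ) (x : Fin (n + 2)) (y : Fin (n + 1)) :
    (y : ℕ) < letterSwap p y x ↔ (y : ℕ) < x := by
  grind [letterSwap, Perm.one_apply]

lemma letterSwap_eq_self_of_lt {p : ℕ} {x : Fin (n + 2)} (y : Fin (n + 1)) (h : (x : ℕ) < p) :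
    letterSwap p y x = x := by
  grind [letterSwap, Perm.one_apply]

lemma letterSwap_eq_self_of_le {p : ℕ} {x : Fin (n + 2)} {y : Fin (n + 1)} (h : (x : ℕ) ≤ y) :
    letterSwap p y x = x := by
  grind [letterSwap, Perm.one_apply]

lemma letterSwap_lt_iff (p : ℕ) (x : Fin (n + 2)) (y : Fin (n + 1)) :
    (letterSwap p y x : ℕ) < p ↔ (x : ℕ) < p := by
  grind [letterSwap, Perm.one_apply]

lemma letterSwap_eq_succ_iff {p : ℕ} (x : Fin (n + 2)) {y : Fin (n + 1)} (h : p ≤ y) :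
    letterSwap p y x = y.succ ↔ x = Fin.last (n + 1) := by
  grind [letterSwap, Perm.one_apply]

/-- Applying `letterSwap p` to the first letter of a permutation that is about to receive the new
first letter `p`; permutations with fewer than two letters are left alone. -/
def headSwap (p : ℕ) : ∀ {n : ℕ}, Perm (Perm (Fin n))
  | 0 => 1
  | 1 => 1
  | _ + 2 => prepend.permCongr (prodCongrLeft fun ρ ↦ letterSwap p (ρ 0))

lemma headSwap_prepend (p : ℕ) (x : Fin (n + 2)) (ρ : Perm (Fin (n + 1))) :
    headSwap p (prepend (x, ρ)) = prepend (letterSwap p (ρ 0) x, ρ) := by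
  simp [headSwap]

lemma headSwap_apply_zero_lt_iff (p : ℕ) (τ : Perm (Fin (n + 1))) :
    (headSwap p τ 0 : ℕ) < p ↔ (τ 0 : ℕ) < p := by
  obtain _ | n := n
  · rfl
  · obtain ⟨⟨x, ρ⟩, rfl⟩ := prepend.surjective τ
    rw [headSwap_prepend, prepend_apply_zero, prepend_apply_zero, letterSwap_lt_iff]

lemma headSwap_eq_self_of_lt {p : ℕ} {τ : Perm (Fin (n + 1))} (h : (τ 0 : ℕ) < p) :
    headSwap p τ = τ := by
  obtain _ | n := n
  · rfl
  · obtain ⟨⟨x, ρ⟩, rfl⟩ := prepend.surjective τ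
    rw [prepend_apply_zero] at h
    rw [headSwap_prepend, letterSwap_eq_self_of_lt _ h]

lemma des_headSwap (p : ℕ) (τ : Perm (Fin n)) : des (headSwap p τ) = des τ := by
  match n with
  | 0 | 1 => rw [Subsingleton.elim (headSwap p τ) τ]
  | n + 2 =>
    obtain ⟨⟨x, ρ⟩, rfl⟩ := prepend.surjective τ
    simp only [headSwap_prepend, des_prepend, lt_letterSwap_iff]

lemma avoidsB_headSwap (p : ℕ) (τ : Perm (Fin n)) : AvoidsB (headSwap p τ) ↔ AvoidsB τ := by
  match n with
  | 0 | 1 => rw [Subsingleton.elim (headSwap p τ) τ]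
  | n + 2 =>
    obtain ⟨⟨x, ρ⟩, rfl⟩ := prepend.surjective τ
    rw [headSwap_prepend]
    obtain h | h := lt_or_ge (ρ 0 : ℕ) x
    · rw [avoidsB_prepend_of_lt h, avoidsB_prepend_of_lt ((lt_letterSwap_iff ..).2 h)]
    · rw [letterSwap_eq_self_of_le h]

lemma avoidsB_prepend_headSwap (p : Fin (n + 3)) (τ : Perm (Fin (n + 2))) :
    AvoidsB (prepend (p, headSwap p τ)) ↔
      AvoidsB τ ∧ (τ 1 < τ 0 → (p : ℕ) ≤ τ 1 → τ 0 = Fin.last (n + 1)) := by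
  rw [avoidsB_prepend, avoidsB_headSwap]
  refine and_congr_right fun _ ↦ ?_
  obtain ⟨⟨x, ρ⟩, rfl⟩ := prepend.surjective τ
  rw [headSwap_prepend, prepend_one_lt_zero_iff, prepend_one_lt_zero_iff, lt_letterSwap_iff]
  refine imp_congr_right fun hlt ↦ ?_
  rw [prepend_apply_one_of_lt hlt, prepend_apply_one_of_lt ((lt_letterSwap_iff ..).2 hlt),
    prepend_apply_zero, prepend_apply_zero, Fin.val_castSucc]
  refine imp_congr_right fun hp ↦ ?_
  rw [← letterSwap_eq_succ_iff x hp, Fin.covBy_iff, Fin.ext_iff]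
  simp [eq_comm]

/-- The descent-preserving bijection from the permutations avoiding 1̲3̲2̲4 to those avoiding
1̲4̲2̲3, built by prepending letters from right to left. It is defined on all permutations, so
that no avoidance proof has to be carried through the recursion. -/
def wilfEquiv : ∀ {n : ℕ}, Perm (Perm (Fin n))
  | 0 => 1
  | _ + 1 => prepend.permCongr (prodCongrRight fun p ↦ wilfEquiv.trans (headSwap p))

lemma wilfEquiv_prepend (p : Fin (n + 1)) (σ : Perm (Fin n)) :
    wilfEquiv (prepend (p, σ)) = prepend (p, headSwap p (wilfEquiv σ)) := by
  simp [wilfEquiv]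

lemma wilfEquiv_apply_zero (π : Perm (Fin (n + 1))) : wilfEquiv π 0 = π 0 := by
  obtain ⟨⟨p, σ⟩, rfl⟩ := prepend.surjective π
  rw [wilfEquiv_prepend, prepend_apply_zero, prepend_apply_zero]

lemma wilfEquiv_one_lt_zero_iff (π : Perm (Fin (n + 2))) :
    wilfEquiv π 1 < wilfEquiv π 0 ↔ π 1 < π 0 := by
  obtain ⟨⟨p, σ⟩, rfl⟩ := prepend.surjective π
  rw [wilfEquiv_prepend, prepend_one_lt_zero_iff, prepend_one_lt_zero_iff,
    headSwap_apply_zero_lt_iff, wilfEquiv_apply_zero]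

lemma wilfEquiv_apply_one_of_lt {π : Perm (Fin (n + 2))} (h : π 1 < π 0) :
    wilfEquiv π 1 = π 1 := by
  obtain ⟨⟨p, σ⟩, rfl⟩ := prepend.surjective π
  rw [prepend_one_lt_zero_iff] at h
  have h' : (wilfEquiv σ 0 : ℕ) < p := by rwa [wilfEquiv_apply_zero]
  rw [wilfEquiv_prepend, headSwap_eq_self_of_lt h', prepend_apply_one_of_lt h',
    prepend_apply_one_of_lt h, wilfEquiv_apply_zero]

lemma des_wilfEquiv : ∀ {n : ℕ} (π : Perm (Fin n)), des (wilfEquiv π) = des π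
  | 0, π | 1, π => by rw [Subsingleton.elim (wilfEquiv π) π]
  | n + 2, π => by
    obtain ⟨⟨p, σ⟩, rfl⟩ := prepend.surjective π
    rw [wilfEquiv_prepend, des_prepend, des_prepend, des_headSwap, des_wilfEquiv σ]
    simp only [headSwap_apply_zero_lt_iff, wilfEquiv_apply_zero]

lemma avoidsB_wilfEquiv : ∀ {n : ℕ} (π : Perm (Fin n)), AvoidsB (wilfEquiv π) ↔ AvoidsA π
  | 0, _ | 1, _ | 2, _ =>
    iff_of_true (avoidsB_of_le_three (by omega) _) (avoidsA_of_le_three (by omega) _)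
  | n + 3, π => by
    obtain ⟨⟨p, σ⟩, rfl⟩ := prepend.surjective π
    rw [wilfEquiv_prepend, avoidsB_prepend_headSwap, avoidsB_wilfEquiv σ, avoidsA_prepend,
      wilfEquiv_one_lt_zero_iff, wilfEquiv_apply_zero]
    refine and_congr_right fun _ ↦ imp_congr_right fun hd ↦ ?_
    rw [wilfEquiv_apply_one_of_lt hd]

end QuasiConsecutive

/-- The quasi-consecutive patterns 1̲3̲2̲4 and 1̲4̲2̲3 are des-Wilf-equivalent. -/
theorem statement16 (n : ℕ) (hn : 1 ≤ n) (k : ℕ) :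
    Nat.card {π : Equiv.Perm (Fin n) // AvoidsA π ∧ des π = k} =
      Nat.card {π : Equiv.Perm (Fin n) // AvoidsB π ∧ des π = k} := by
  refine Nat.card_congr (QuasiConsecutive.wilfEquiv.subtypeEquiv fun π ↦ ?_)
  rw [QuasiConsecutive.avoidsB_wilfEquiv, QuasiConsecutive.des_wilfEquiv]
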